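/- (Evaluation of the Askey-Wilson integral) Let 0<q<1 and a,b,c,d∈ℂ with |a|,|b|,|c|,|d|<1. Then (1/(2π)) ∫_0^π w_{a,b,c,d}(e^{iθ}) dθ = (abcd;q)_∞ / (ab, ac, ad, bc, bd, cd, q;q)_∞. -/

import Mathlib

/-!
Write `q = s²` with `0 < s < 1`, and let `I(a,b,c,d)` be the integral of the weight over the full
unit circle; reflection `z ↦ z⁻¹` shows that it is twice the integral over the upper half.

The heart of the proof is a contour shift. The function `h = AWh`, essentially
`w_{sa,sb,sc,sd}(z) / (z - z⁻¹)`, is holomorphic on the annulus `s ≤ |z| ≤ s⁻¹`, so the integral of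
`h(sz) - h(s⁻¹z)` against `dz/z` over the unit circle vanishes (`AWh_circle`). This difference is
`s⁻¹ w_{a,b,c,d}(z) ((1 - e₄)(z + z⁻¹) - (e₁ - e₃))`, with `eₖ` the elementary symmetric polynomials
of `a,b,c,d` (`AWh_diff`), which gives the first moment of the weight (`AW_moment`). Since
`w_{aq,b,c,d}(z) = (1 - az)(1 - az⁻¹) w_{a,b,c,d}(z)`, it follows that
`(1 - abcd) I(aq,b,c,d) = (1 - ab)(1 - ac)(1 - ad) I(a,b,c,d)` (`AWI_shift`).

Hence `J = (ab,ac,ad,bc,bd,cd;q)_∞ / (abcd;q)_∞ * I` is unchanged under `a ↦ aq`, and by continuity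
under `a ↦ 0`; being symmetric, it does not depend on the parameters at all (`AWJ_const`). Its
value is read off at `(s, -s, s², -s²)`, where the weight collapses to `(1 - z²)(1 - z⁻²)`
(`AWJ_special`).
-/

noncomputable section

/-- The infinite q-shifted factorial `(a;q)_∞`. -/
def qpi (q a : ℂ) : ℂ := ∏' j : ℕ, (1 - a * q ^ j)

/-- The Askey-Wilson weight
`w_{a,b,c,d}(z) = (z²,z^{-2};q)_∞ / (az,az^{-1},bz,bz^{-1},cz,cz^{-1},dz,dz^{-1};q)_∞`. -/
def AWw (q a b c d z : ℂ) : ℂ :=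
  qpi q (z ^ 2) * qpi q (z⁻¹ ^ 2) /
    (qpi q (a * z) * qpi q (a * z⁻¹) * qpi q (b * z) * qpi q (b * z⁻¹) *
      qpi q (c * z) * qpi q (c * z⁻¹) * qpi q (d * z) * qpi q (d * z⁻¹))

open Filter Topology

/-! ### The infinite `q`-shifted factorial -/

lemma qpi_summable {q : ℂ} (hq : ‖q‖ < 1) (a : ℂ) : Summable fun j : ℕ => ‖-(a * q ^ j)‖ := by
  simp only [norm_neg, norm_mul, norm_pow]
  exact (summable_geometric_of_lt_one (norm_nonneg _) hq).mul_left _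

lemma qpi_multipliable {q : ℂ} (hq : ‖q‖ < 1) (a : ℂ) :
    Multipliable fun j : ℕ => 1 - a * q ^ j := by
  simpa [sub_eq_add_neg] using multipliable_one_add_of_summable (qpi_summable hq a)

lemma qpi_step {q : ℂ} (hq : ‖q‖ < 1) (a : ℂ) : qpi q a = (1 - a) * qpi q (a * q) := by
  have h : Multipliable fun j : ℕ => 1 - a * q ^ (j + 1) := by
    simpa [pow_succ', mul_assoc] using qpi_multipliable hq (a * q)
  unfold qpi
  rw [tprod_eq_zero_mul' (f := fun j : ℕ => 1 - a * q ^ j) h]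
  simp [pow_succ', mul_assoc]

lemma one_sub_ne_zero_of_norm {a : ℂ} (ha : ‖a‖ < 1) : 1 - a ≠ 0 := by
  intro h
  rw [← sub_eq_zero.mp h] at ha
  simp at ha

lemma qpi_ne_zero {q : ℂ} (hq : ‖q‖ < 1) {a : ℂ} (ha : ‖a‖ < 1) : qpi q a ≠ 0 := by
  have := tprod_one_add_ne_zero_of_summable (f := fun j : ℕ => -(a * q ^ j)) (fun j => by
    rw [← sub_eq_add_neg]
    apply one_sub_ne_zero_of_norm
    rw [norm_mul, norm_pow]
    exact (mul_le_of_le_one_right (norm_nonneg _)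
      (pow_le_one₀ (norm_nonneg _) hq.le)).trans_lt ha) (qpi_summable hq a)
  simpa [qpi, sub_eq_add_neg] using this

lemma qpi_differentiable {q : ℂ} (hq : ‖q‖ < 1) : Differentiable ℂ (qpi q) := by
  intro a
  have hu : Summable fun j : ℕ => (‖a‖ + 1) * ‖q‖ ^ j :=
    (summable_geometric_of_lt_one (norm_nonneg _) hq).mul_left _
  have h := hu.hasProdLocallyUniformlyOn_nat_one_add (f := fun j x => -(x * q ^ j))
    (Metric.isOpen_ball (x := (0 : ℂ)) (ε := ‖a‖ + 1)) (Eventually.of_forall fun n x hx => by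
      rw [norm_neg, norm_mul, norm_pow]
      gcongr
      simpa using (Metric.mem_ball.mp hx).le) (fun n => by fun_prop)
  have h2 : DifferentiableOn ℂ (fun x => ∏' j : ℕ, (1 + -(x * q ^ j))) (Metric.ball 0 (‖a‖ + 1)) :=
    TendstoLocallyUniformlyOn.differentiableOn h
      (Eventually.of_forall fun s => by fun_prop) Metric.isOpen_ball
  have h3 : qpi q = fun x => ∏' j : ℕ, (1 + -(x * q ^ j)) := by
    funext x; simp [qpi, sub_eq_add_neg]
  rw [h3]
  exact (h2 a (by simp)).differentiableAt (Metric.isOpen_ball.mem_nhds (by simp))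

lemma qpi_continuous {q : ℂ} (hq : ‖q‖ < 1) : Continuous (qpi q) :=
  (qpi_differentiable hq).continuous

lemma qpi_mul_neg {q : ℂ} (hq : ‖q‖ < 1) (x : ℂ) :
    qpi q x * qpi q (-x) = qpi (q ^ 2) (x ^ 2) := by
  unfold qpi
  rw [← (qpi_multipliable hq x).tprod_mul (qpi_multipliable hq (-x))]
  congr 1; funext j; ring

lemma qpi_even_odd {q : ℂ} (hq : ‖q‖ < 1) (x : ℂ) :
    qpi (q ^ 2) x * qpi (q ^ 2) (x * q) = qpi q x := by
  have hq2 : ‖q ^ 2‖ < 1 := by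
    rw [norm_pow]; exact pow_lt_one₀ (norm_nonneg _) hq two_ne_zero
  have he : Multipliable fun k : ℕ => 1 - x * q ^ (2 * k) := by
    simpa [pow_mul] using qpi_multipliable hq2 x
  have ho : Multipliable fun k : ℕ => 1 - x * q ^ (2 * k + 1) := by
    refine (qpi_multipliable hq2 (x * q)).congr fun k => ?_
    rw [← pow_mul]; ring
  unfold qpi
  rw [← tprod_even_mul_odd (f := fun j : ℕ => 1 - x * q ^ j) he ho]
  congr 2
  · funext j; rw [← pow_mul]
  · funext j; rw [← pow_mul]; ring

/-- The Askey–Wilson parameters `√q, -√q, q, -q` turn the denominator of the weight into the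
tail of its numerator. Here `s` is a square root of `q`. -/
lemma qpi_four {s : ℂ} (hs : ‖s ^ 2‖ < 1) (z : ℂ) :
    qpi (s ^ 2) (s * z) * qpi (s ^ 2) (-s * z) * qpi (s ^ 2) (s ^ 2 * z) *
      qpi (s ^ 2) (-s ^ 2 * z) = qpi (s ^ 2) (s ^ 2 * z ^ 2) := by
  have h1 := qpi_mul_neg hs (s * z)
  have h2 := qpi_mul_neg hs (s ^ 2 * z)
  have h3 := qpi_even_odd hs (s ^ 2 * z ^ 2)
  rw [← h3, neg_mul, neg_mul, h1, mul_assoc, h2]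
  ring_nf

/-! ### The weight and its integral over the circle -/

lemma AWw_shift {q : ℂ} (hq : ‖q‖ < 1) {a z : ℂ} (b c d : ℂ) (h1 : ‖a * z‖ < 1)
    (h2 : ‖a * z⁻¹‖ < 1) :
    AWw q (a * q) b c d z = AWw q a b c d z * ((1 - a * z) * (1 - a * z⁻¹)) := by
  have n1 := one_sub_ne_zero_of_norm h1
  have n2 := one_sub_ne_zero_of_norm h2
  unfold AWw
  rw [qpi_step hq (a * z), qpi_step hq (a * z⁻¹), mul_right_comm a z q, mul_right_comm a z⁻¹ q]
  rw [div_mul_eq_mul_div,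
    ← mul_div_mul_right _ _ (mul_ne_zero n1 n2)]
  congr 1
  ring

/-- The Askey–Wilson integral over the full unit circle. -/
def AWI (q a b c d : ℂ) : ℂ :=
  ∫ θ in (0 : ℝ)..2 * Real.pi, AWw q a b c d (Complex.exp ((θ : ℂ) * Complex.I))

lemma norm_mul_exp_lt {a : ℂ} (ha : ‖a‖ < 1) (θ : ℝ) :
    ‖a * Complex.exp ((θ : ℂ) * Complex.I)‖ < 1 ∧
      ‖a * (Complex.exp ((θ : ℂ) * Complex.I))⁻¹‖ < 1 := by
  simp [ha]

lemma AWw_continuous_param {q : ℂ} (hq : ‖q‖ < 1) {b c d : ℂ}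
    (hb : ‖b‖ < 1) (hc : ‖c‖ < 1) (hd : ‖d‖ < 1) :
    Continuous fun p : Metric.ball (0 : ℂ) 1 × ℝ =>
      AWw q p.1 b c d (Complex.exp ((p.2 : ℂ) * Complex.I)) := by
  have hqc := qpi_continuous hq
  have hE : Continuous fun p : Metric.ball (0 : ℂ) 1 × ℝ =>
      Complex.exp ((p.2 : ℂ) * Complex.I) := by fun_prop
  have hE' : Continuous fun p : Metric.ball (0 : ℂ) 1 × ℝ =>
      (Complex.exp ((p.2 : ℂ) * Complex.I))⁻¹ := hE.inv₀ fun p => Complex.exp_ne_zero _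
  unfold AWw
  refine Continuous.div (by fun_prop) (by fun_prop) fun p => ?_
  have key : ∀ x : ℂ, ‖x‖ < 1 → qpi q (x * Complex.exp ((p.2 : ℂ) * Complex.I)) ≠ 0 ∧
      qpi q (x * (Complex.exp ((p.2 : ℂ) * Complex.I))⁻¹) ≠ 0 := fun x hx =>
    ⟨qpi_ne_zero hq (norm_mul_exp_lt hx _).1, qpi_ne_zero hq (norm_mul_exp_lt hx _).2⟩
  have ha := key p.1 (mem_ball_zero_iff.mp p.1.2)
  have hb := key b hb
  have hc := key c hc
  have hd := key d hd
  simp only [ne_eq, mul_eq_zero, not_or]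
  tauto

lemma AWI_continuous_param {q : ℂ} (hq : ‖q‖ < 1) {b c d : ℂ}
    (hb : ‖b‖ < 1) (hc : ‖c‖ < 1) (hd : ‖d‖ < 1) :
    Continuous fun a : Metric.ball (0 : ℂ) 1 => AWI q a b c d :=
  intervalIntegral.continuous_parametric_intervalIntegral_of_continuous'
    (f := fun (a : Metric.ball (0 : ℂ) 1) (θ : ℝ) =>
      AWw q a b c d (Complex.exp ((θ : ℂ) * Complex.I)))
    (AWw_continuous_param hq hb hc hd) 0 (2 * Real.pi)

lemma AWw_continuous {q : ℂ} (hq : ‖q‖ < 1) {a b c d : ℂ}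
    (ha : ‖a‖ < 1) (hb : ‖b‖ < 1) (hc : ‖c‖ < 1) (hd : ‖d‖ < 1) :
    Continuous fun θ : ℝ => AWw q a b c d (Complex.exp ((θ : ℂ) * Complex.I)) :=
  (AWw_continuous_param hq hb hc hd).comp
    (f := fun θ : ℝ => ((⟨a, by simpa using ha⟩ : Metric.ball (0 : ℂ) 1), θ)) (by fun_prop)

/-! ### The contour shift -/

/-- The primitive whose `q`-difference is the weight times a Laurent polynomial. It equals
`w(z) / (z - z⁻¹)` with all parameters multiplied by `s = √q`, with the removable
singularities at `z = ±1` cancelled. -/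
def AWh (s a b c d z : ℂ) : ℂ :=
  z⁻¹ * (qpi (s ^ 2) (z ^ 2) * qpi (s ^ 2) (s ^ 2 * z⁻¹ ^ 2)) /
    (qpi (s ^ 2) (s * a * z) * qpi (s ^ 2) (s * a * z⁻¹) * qpi (s ^ 2) (s * b * z) *
      qpi (s ^ 2) (s * b * z⁻¹) * qpi (s ^ 2) (s * c * z) * qpi (s ^ 2) (s * c * z⁻¹) *
      qpi (s ^ 2) (s * d * z) * qpi (s ^ 2) (s * d * z⁻¹))

lemma AWh_differentiableAt {s : ℝ} (hs0 : 0 < s) (hs1 : s < 1) {a b c d : ℂ}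
    (ha : ‖a‖ < 1) (hb : ‖b‖ < 1) (hc : ‖c‖ < 1) (hd : ‖d‖ < 1) {z : ℂ}
    (h1 : s ≤ ‖z‖) (h2 : ‖z‖ ≤ s⁻¹) : DifferentiableAt ℂ (AWh s a b c d) z := by
  have hq : ‖(s : ℂ) ^ 2‖ < 1 := by
    rw [norm_pow, Complex.norm_real, Real.norm_of_nonneg hs0.le]
    exact pow_lt_one₀ hs0.le hs1 two_ne_zero
  have hz : z ≠ 0 := norm_pos_iff.mp (hs0.trans_le h1)
  have hqd := qpi_differentiable hq
  have hcomp : ∀ f : ℂ → ℂ, DifferentiableAt ℂ f z →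
      DifferentiableAt ℂ (fun x => qpi ((s : ℂ) ^ 2) (f x)) z := fun f hf =>
    (hqd (f z)).comp z hf
  have hinv : DifferentiableAt ℂ (fun x : ℂ => x⁻¹) z := differentiableAt_inv hz
  have key : ∀ x : ℂ, ‖x‖ < 1 → qpi ((s : ℂ) ^ 2) (s * x * z) ≠ 0 ∧
      qpi ((s : ℂ) ^ 2) (s * x * z⁻¹) ≠ 0 := by
    intro x hx
    have e1 : s * ‖z‖ ≤ 1 := by
      calc s * ‖z‖ ≤ s * s⁻¹ := by gcongr
        _ = 1 := mul_inv_cancel₀ hs0.ne'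
    have e2 : s * ‖z‖⁻¹ ≤ 1 := by
      calc s * ‖z‖⁻¹ ≤ s * s⁻¹ := by gcongr
        _ = 1 := mul_inv_cancel₀ hs0.ne'
    constructor
    · apply qpi_ne_zero hq
      rw [norm_mul, norm_mul, Complex.norm_real, Real.norm_of_nonneg hs0.le]
      nlinarith [norm_nonneg x]
    · apply qpi_ne_zero hq
      rw [norm_mul, norm_mul, Complex.norm_real, Real.norm_of_nonneg hs0.le, norm_inv]
      nlinarith [norm_nonneg x]
  have hden := fun x => hcomp (fun w => s * x * w) (by fun_prop)
  have hden' := fun x => hcomp (fun w => s * x * w⁻¹) (hinv.const_mul _)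
  unfold AWh
  refine DifferentiableAt.div ?_ ?_ ?_
  · exact hinv.mul ((hcomp _ (by fun_prop)).mul (hcomp _ ((hinv.pow 2).const_mul _)))
  · exact (((((((hden a).mul (hden' a)).mul (hden b)).mul (hden' b)).mul (hden c)).mul
      (hden' c)).mul (hden d)).mul (hden' d)
  · have ha := key a ha
    have hb := key b hb
    have hc := key c hc
    have hd := key d hd
    simp only [ne_eq, mul_eq_zero, not_or]
    tauto

/-- The integrals of `AWh` against `dz/z` over the circles of radius `s` and `s⁻¹` agree, by
Cauchy's theorem on the annulus. -/
lemma AWh_circle {s : ℝ} (hs0 : 0 < s) (hs1 : s < 1) {a b c d : ℂ}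
    (ha : ‖a‖ < 1) (hb : ‖b‖ < 1) (hc : ‖c‖ < 1) (hd : ‖d‖ < 1) :
    ∫ θ in (0 : ℝ)..2 * Real.pi,
      (AWh s a b c d (s * Complex.exp ((θ : ℂ) * Complex.I)) -
        AWh s a b c d ((s : ℂ)⁻¹ * Complex.exp ((θ : ℂ) * Complex.I))) = 0 := by
  have hs2 : s ≤ s⁻¹ := hs1.le.trans (one_lt_inv₀ hs0 |>.mpr hs1).le
  have hcirc : ∀ R : ℝ, 0 < R → (∮ z in C(0, R), (z - 0)⁻¹ • AWh s a b c d z) =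
      Complex.I * ∫ θ in (0 : ℝ)..2 * Real.pi,
        AWh s a b c d (R * Complex.exp ((θ : ℂ) * Complex.I)) := by
    intro R hR
    rw [circleIntegral, ← intervalIntegral.integral_const_mul]
    congr 1
    funext θ
    have hR' : (R : ℂ) ≠ 0 := by exact_mod_cast hR.ne'
    have := Complex.exp_ne_zero ((θ : ℂ) * Complex.I)
    simp only [deriv_circleMap, circleMap, zero_add, sub_zero, smul_eq_mul]
    field_simp
  have hdiff : ∀ z : ℂ, s ≤ ‖z‖ → ‖z‖ ≤ s⁻¹ → DifferentiableAt ℂ (AWh s a b c d) z :=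
    fun z h1 h2 => AWh_differentiableAt hs0 hs1 ha hb hc hd h1 h2
  have h := Complex.circleIntegral_sub_center_inv_smul_eq_of_differentiable_on_annulus_off_countable
    (c := 0) (f := AWh s a b c d) hs0 hs2 Set.countable_empty
    (fun z hz => (hdiff z (by simpa using hz.2) (by simpa using hz.1)).continuousAt.continuousWithinAt)
    (fun z hz => hdiff z (le_of_lt (by simpa using hz.1.2))
      (le_of_lt (by simpa using hz.1.1)))
  rw [hcirc _ hs0, hcirc _ (inv_pos.mpr hs0)] at h
  have h' := mul_left_cancel₀ Complex.I_ne_zero h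
  have hcont : ∀ R : ℝ, s ≤ R → R ≤ s⁻¹ → Continuous fun θ : ℝ =>
      AWh s a b c d (R * Complex.exp ((θ : ℂ) * Complex.I)) := by
    intro R h1 h2
    have hR : 0 < R := hs0.trans_le h1
    refine continuous_iff_continuousAt.mpr fun θ => ?_
    refine ContinuousAt.comp (f := fun θ : ℝ => (R : ℂ) * Complex.exp ((θ : ℂ) * Complex.I))
      (hdiff _ ?_ ?_).continuousAt (by fun_prop) <;>
    simpa [abs_of_pos hR]
  have c1 := hcont s le_rfl hs2
  have c2 := hcont s⁻¹ hs2 le_rfl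
  push_cast at h' c2
  rw [intervalIntegral.integral_sub (c1.intervalIntegrable _ _) (c2.intervalIntegrable _ _),
    ← h', sub_self]

/-- The `q`-difference of `AWh` on the unit circle. -/
lemma AWh_diff {s : ℂ} (hs0 : s ≠ 0) (hs : ‖s ^ 2‖ < 1) {a b c d z : ℂ}
    (ha : ‖a‖ < 1) (hb : ‖b‖ < 1) (hc : ‖c‖ < 1) (hd : ‖d‖ < 1) (hz : ‖z‖ = 1) :
    s * (AWh s a b c d (s * z) - AWh s a b c d (s⁻¹ * z)) =
      AWw (s ^ 2) a b c d z * ((1 - a * b * c * d) * (z + z⁻¹) -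
        (a + b + c + d - (a * b * c + a * b * d + a * c * d + b * c * d))) := by
  have hz0 : z ≠ 0 := by rintro rfl; simp at hz
  set q := s ^ 2 with hqdef
  have hq0 : q ≠ 0 := pow_ne_zero 2 hs0
  have n : ∀ x : ℂ, ‖x‖ < 1 → (1 - x * z ≠ 0 ∧ 1 - x * z⁻¹ ≠ 0) ∧
      (qpi q (x * z) = (1 - x * z) * qpi q (q * x * z)) ∧
      (qpi q (x * z⁻¹) = (1 - x * z⁻¹) * qpi q (q * x * z⁻¹)) ∧
      qpi q (q * x * z) ≠ 0 ∧ qpi q (q * x * z⁻¹) ≠ 0 := by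
    intro x hx
    have hx1 : ‖x * z‖ < 1 := by simpa [hz]
    have hx2 : ‖x * z⁻¹‖ < 1 := by simpa [hz]
    have s1 : qpi q (x * z) = (1 - x * z) * qpi q (q * x * z) := by
      rw [qpi_step hs (x * z)]; ring_nf
    have s2 : qpi q (x * z⁻¹) = (1 - x * z⁻¹) * qpi q (q * x * z⁻¹) := by
      rw [qpi_step hs (x * z⁻¹)]; ring_nf
    exact ⟨⟨one_sub_ne_zero_of_norm hx1, one_sub_ne_zero_of_norm hx2⟩, s1, s2,
      right_ne_zero_of_mul (s1 ▸ qpi_ne_zero hs hx1),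
      right_ne_zero_of_mul (s2 ▸ qpi_ne_zero hs hx2)⟩
  -- the numerators, all expressed through `(q z²;q)_∞` and `(q² z⁻²;q)_∞`
  have k1 : qpi q (z ^ 2) = (1 - z ^ 2) * qpi q (q * z ^ 2) := by
    rw [qpi_step hs, mul_comm (z ^ 2) q]
  have k2 : qpi q (z⁻¹ ^ 2) = (1 - z⁻¹ ^ 2) * ((1 - q * z⁻¹ ^ 2) * qpi q (q ^ 2 * z⁻¹ ^ 2)) := by
    rw [qpi_step hs, qpi_step hs]; ring_nf
  have k3 : qpi q ((s⁻¹ * z) ^ 2) = (1 - q⁻¹ * z ^ 2) * ((1 - z ^ 2) * qpi q (q * z ^ 2)) := by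
    rw [← k1, qpi_step hs]
    congr 2
    · rw [mul_pow, inv_pow]
    · rw [mul_pow, inv_pow, ← hqdef]; field_simp
  have k4 : q * (s * z)⁻¹ ^ 2 = z⁻¹ ^ 2 := by
    rw [mul_inv, mul_pow, inv_pow s, ← hqdef]; field_simp
  have k5 : q * (s⁻¹ * z)⁻¹ ^ 2 = q ^ 2 * z⁻¹ ^ 2 := by
    rw [mul_inv, inv_inv, mul_pow, ← hqdef]; ring
  have k6 : (s * z) ^ 2 = q * z ^ 2 := by rw [mul_pow]
  have d1 : ∀ x, s * x * (s * z) = q * x * z := fun x => by rw [hqdef]; ring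
  have d2 : ∀ x, s * x * (s * z)⁻¹ = x * z⁻¹ := fun x => by field_simp
  have d3 : ∀ x, s * x * (s⁻¹ * z) = x * z := fun x => by field_simp
  have d4 : ∀ x, s * x * (s⁻¹ * z)⁻¹ = q * x * z⁻¹ := fun x => by rw [hqdef]; field_simp
  unfold AWh AWw
  simp only [← hqdef]
  rw [k4, k5, k6, k3, k2, k1]
  simp only [d1, d2, d3, d4]
  obtain ⟨⟨a1, a2⟩, a3, a4, a5, a6⟩ := n a ha
  obtain ⟨⟨b1, b2⟩, b3, b4, b5, b6⟩ := n b hb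
  obtain ⟨⟨c1, c2⟩, c3, c4, c5, c6⟩ := n c hc
  obtain ⟨⟨e1, e2⟩, e3, e4, e5, e6⟩ := n d hd
  rw [a3, a4, b3, b4, c3, c4, e3, e4]
  generalize qpi q (q * a * z) = A at *
  generalize qpi q (q * a * z⁻¹) = A' at *
  generalize qpi q (q * b * z) = B at *
  generalize qpi q (q * b * z⁻¹) = B' at *
  generalize qpi q (q * c * z) = C at *
  generalize qpi q (q * c * z⁻¹) = C' at *
  generalize qpi q (q * d * z) = D at *
  generalize qpi q (q * d * z⁻¹) = D' at *
  generalize qpi q (q * z ^ 2) = U at *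
  generalize qpi q (q ^ 2 * z⁻¹ ^ 2) = V at *
  -- `t1` and `t2` bring both quotients over the denominator of the weight
  have t1 : ∀ N : ℂ, N / (A * ((1 - a * z⁻¹) * A') * B * ((1 - b * z⁻¹) * B') * C *
      ((1 - c * z⁻¹) * C') * D * ((1 - d * z⁻¹) * D')) =
      N * ((1 - a * z) * (1 - b * z) * (1 - c * z) * (1 - d * z)) /
      ((1 - a * z) * A * ((1 - a * z⁻¹) * A') * ((1 - b * z) * B) * ((1 - b * z⁻¹) * B') *
        ((1 - c * z) * C) * ((1 - c * z⁻¹) * C') * ((1 - d * z) * D) * ((1 - d * z⁻¹) * D')) := by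
    intro N
    rw [← mul_div_mul_right N _ (mul_ne_zero (mul_ne_zero (mul_ne_zero a1 b1) c1) e1)]
    congr 1; ring
  have t2 : ∀ N : ℂ, N / ((1 - a * z) * A * A' * ((1 - b * z) * B) * B' * ((1 - c * z) * C) *
      C' * ((1 - d * z) * D) * D') =
      N * ((1 - a * z⁻¹) * (1 - b * z⁻¹) * (1 - c * z⁻¹) * (1 - d * z⁻¹)) /
      ((1 - a * z) * A * ((1 - a * z⁻¹) * A') * ((1 - b * z) * B) * ((1 - b * z⁻¹) * B') *
        ((1 - c * z) * C) * ((1 - c * z⁻¹) * C') * ((1 - d * z) * D) * ((1 - d * z⁻¹) * D')) := by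
    intro N
    rw [← mul_div_mul_right N _ (mul_ne_zero (mul_ne_zero (mul_ne_zero a2 b2) c2) e2)]
    congr 1; ring
  rw [t1, t2, ← sub_div, div_mul_eq_mul_div, ← mul_div_assoc]
  congr 1
  rw [hqdef]
  clear t1 t2 k1 k2 k3 k4 k5 k6 d1 d2 d3 d4 a1 a2 a3 a4 b1 b2 b3 b4 c1 c2 c3 c4 e1 e2 e3 e4 n
  field_simp
  ring

/-- The first moment of the weight, from integrating the `q`-difference of `AWh`. -/
lemma AW_moment {s : ℝ} (hs0 : 0 < s) (hs1 : s < 1) {a b c d : ℂ}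
    (ha : ‖a‖ < 1) (hb : ‖b‖ < 1) (hc : ‖c‖ < 1) (hd : ‖d‖ < 1) :
    ∫ θ in (0 : ℝ)..2 * Real.pi,
      AWw ((s : ℂ) ^ 2) a b c d (Complex.exp ((θ : ℂ) * Complex.I)) *
        ((1 - a * b * c * d) * (Complex.exp ((θ : ℂ) * Complex.I) +
          (Complex.exp ((θ : ℂ) * Complex.I))⁻¹) -
        (a + b + c + d - (a * b * c + a * b * d + a * c * d + b * c * d))) = 0 := by
  have hq : ‖(s : ℂ) ^ 2‖ < 1 := by
    rw [norm_pow, Complex.norm_real, Real.norm_of_nonneg hs0.le]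
    exact pow_lt_one₀ hs0.le hs1 two_ne_zero
  have h := congrArg (fun x : ℂ => (s : ℂ) * x) (AWh_circle hs0 hs1 ha hb hc hd)
  simp only [mul_zero, ← intervalIntegral.integral_const_mul] at h
  rw [← h]
  congr 1
  funext θ
  exact (AWh_diff (by exact_mod_cast hs0.ne') hq ha hb hc hd
    (Complex.norm_exp_ofReal_mul_I θ)).symm

/-- The functional equation of the integral under `a ↦ aq`, with `q = s²`: the factor
`(1 - az)(1 - az⁻¹)` produced by the shift is linear in `z + z⁻¹`, whose moment is known. -/
lemma AWI_shift {s : ℝ} (hs0 : 0 < s) (hs1 : s < 1) {a b c d : ℂ}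
    (ha : ‖a‖ < 1) (hb : ‖b‖ < 1) (hc : ‖c‖ < 1) (hd : ‖d‖ < 1) :
    (1 - a * b * c * d) * AWI ((s : ℂ) ^ 2) (a * (s : ℂ) ^ 2) b c d =
      (1 - a * b) * (1 - a * c) * (1 - a * d) * AWI ((s : ℂ) ^ 2) a b c d := by
  have hq : ‖(s : ℂ) ^ 2‖ < 1 := by
    rw [norm_pow, Complex.norm_real, Real.norm_of_nonneg hs0.le]
    exact pow_lt_one₀ hs0.le hs1 two_ne_zero
  have hm := AW_moment hs0 hs1 ha hb hc hd
  have hw := AWw_continuous hq ha hb hc hd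
  have hE : Continuous fun θ : ℝ => Complex.exp ((θ : ℂ) * Complex.I) := by fun_prop
  have hE' : Continuous fun θ : ℝ => (Complex.exp ((θ : ℂ) * Complex.I))⁻¹ :=
    hE.inv₀ fun θ => Complex.exp_ne_zero _
  rw [← add_zero ((1 - a * b) * (1 - a * c) * (1 - a * d) * AWI ((s : ℂ) ^ 2) a b c d),
    ← mul_zero (-a), ← hm]
  unfold AWI
  simp only [← intervalIntegral.integral_const_mul]
  rw [← intervalIntegral.integral_add
    (Continuous.intervalIntegrable (by fun_prop) _ _)
    (Continuous.intervalIntegrable (by fun_prop) _ _)]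
  congr 1
  funext θ
  rw [AWw_shift hq b c d (norm_mul_exp_lt ha θ).1 (norm_mul_exp_lt ha θ).2]
  have := Complex.exp_ne_zero ((θ : ℂ) * Complex.I)
  generalize AWw ((s : ℂ) ^ 2) a b c d _ = W
  generalize Complex.exp ((θ : ℂ) * Complex.I) = z at *
  field_simp
  ring

/-! ### Independence of the parameters -/

/-- The normalised integral: `(ab,ac,ad,bc,bd,cd;q)_∞ / (abcd;q)_∞` times the integral over the full
circle. It does not depend on `a,b,c,d`. -/
def AWJ (q a b c d : ℂ) : ℂ :=
  AWI q a b c d * (qpi q (a * b) * qpi q (a * c) * qpi q (a * d) *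
    qpi q (b * c) * qpi q (b * d) * qpi q (c * d)) / qpi q (a * b * c * d)

lemma AWJ_rotate (q a b c d : ℂ) : AWJ q a b c d = AWJ q b c d a := by
  have h : AWI q a b c d = AWI q b c d a := by
    unfold AWI AWw
    congr 1; funext θ; congr 1; ring
  unfold AWJ
  rw [h, mul_comm b a, mul_comm c a, mul_comm d a, show b * c * d * a = a * b * c * d by ring]
  ring

lemma norm_mul_lt_one {x y : ℂ} (hx : ‖x‖ < 1) (hy : ‖y‖ < 1) : ‖x * y‖ < 1 := by
  rw [norm_mul]
  exact mul_lt_one_of_nonneg_of_lt_one_left (norm_nonneg _) hx hy.le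

lemma AWJ_shift {s : ℝ} (hs0 : 0 < s) (hs1 : s < 1) {a b c d : ℂ}
    (ha : ‖a‖ < 1) (hb : ‖b‖ < 1) (hc : ‖c‖ < 1) (hd : ‖d‖ < 1) :
    AWJ ((s : ℂ) ^ 2) (a * (s : ℂ) ^ 2) b c d = AWJ ((s : ℂ) ^ 2) a b c d := by
  have hq : ‖(s : ℂ) ^ 2‖ < 1 := by
    rw [norm_pow, Complex.norm_real, Real.norm_of_nonneg hs0.le]
    exact pow_lt_one₀ hs0.le hs1 two_ne_zero
  have h := AWI_shift hs0 hs1 ha hb hc hd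
  have habcd : ‖a * b * c * d‖ < 1 :=
    norm_mul_lt_one (norm_mul_lt_one (norm_mul_lt_one ha hb) hc) hd
  have n1 := one_sub_ne_zero_of_norm habcd
  have n2 := qpi_ne_zero hq habcd
  unfold AWJ
  set q := (s : ℂ) ^ 2
  rw [qpi_step hq (a * b * c * d)] at n2 ⊢
  rw [qpi_step hq (a * b), qpi_step hq (a * c), qpi_step hq (a * d)]
  have n3 := right_ne_zero_of_mul n2
  rw [show a * q * b * c * d = a * b * c * d * q by ring, mul_right_comm a q b,
    mul_right_comm a q c, mul_right_comm a q d, div_eq_div_iff n3 n2]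
  linear_combination (qpi q (a * b * q) * qpi q (a * c * q) * qpi q (a * d * q) *
    qpi q (b * c) * qpi q (b * d) * qpi q (c * d) * qpi q (a * b * c * d * q)) * h

/-- `AWJ` takes the same value at all `a qⁿ`, and these tend to `0`. -/
lemma AWJ_zero {s : ℝ} (hs0 : 0 < s) (hs1 : s < 1) {a b c d : ℂ}
    (ha : ‖a‖ < 1) (hb : ‖b‖ < 1) (hc : ‖c‖ < 1) (hd : ‖d‖ < 1) :
    AWJ ((s : ℂ) ^ 2) a b c d = AWJ ((s : ℂ) ^ 2) 0 b c d := by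
  have hq : ‖(s : ℂ) ^ 2‖ < 1 := by
    rw [norm_pow, Complex.norm_real, Real.norm_of_nonneg hs0.le]
    exact pow_lt_one₀ hs0.le hs1 two_ne_zero
  set q := (s : ℂ) ^ 2 with hqdef
  have hmem : ∀ n : ℕ, ‖a * q ^ n‖ < 1 := fun n => by
    rw [norm_mul, norm_pow]
    exact (mul_le_of_le_one_right (norm_nonneg _)
      (pow_le_one₀ (norm_nonneg _) hq.le)).trans_lt ha
  have hconst : ∀ n : ℕ, AWJ q (a * q ^ n) b c d = AWJ q a b c d := by
    intro n
    induction n with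
    | zero => simp
    | succ n ih => rw [← ih, pow_succ, ← mul_assoc, AWJ_shift hs0 hs1 (hmem n) hb hc hd]
  have hcont : Continuous fun x : Metric.ball (0 : ℂ) 1 => AWJ q x b c d := by
    have h1 := AWI_continuous_param hq hb hc hd
    have h2 := qpi_continuous hq
    unfold AWJ
    refine Continuous.div (by fun_prop) (by fun_prop) fun x => qpi_ne_zero hq ?_
    exact norm_mul_lt_one (norm_mul_lt_one (norm_mul_lt_one (mem_ball_zero_iff.mp x.2) hb) hc) hd
  have hlim : Tendsto (fun n : ℕ => (⟨a * q ^ n, mem_ball_zero_iff.mpr (hmem n)⟩ :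
      Metric.ball (0 : ℂ) 1)) atTop (𝓝 ⟨0, by simp⟩) := by
    rw [tendsto_subtype_rng]
    simpa using (tendsto_pow_atTop_nhds_zero_of_norm_lt_one hq).const_mul a
  have h := (hcont.tendsto _).comp hlim
  refine tendsto_nhds_unique (tendsto_const_nhds.congr fun n => ?_) h
  exact (hconst n).symm

lemma AWJ_const {s : ℝ} (hs0 : 0 < s) (hs1 : s < 1) {a b c d : ℂ}
    (ha : ‖a‖ < 1) (hb : ‖b‖ < 1) (hc : ‖c‖ < 1) (hd : ‖d‖ < 1) :
    AWJ ((s : ℂ) ^ 2) a b c d = AWJ ((s : ℂ) ^ 2) 0 0 0 0 := by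
  have h0 : ‖(0 : ℂ)‖ < 1 := by simp
  rw [AWJ_zero hs0 hs1 ha hb hc hd, AWJ_rotate, AWJ_zero hs0 hs1 hb hc hd h0, AWJ_rotate,
    AWJ_zero hs0 hs1 hc hd h0 h0, AWJ_rotate, AWJ_zero hs0 hs1 hd h0 h0 h0]

/-! ### Evaluation at a special point -/

/-- At `(a,b,c,d) = (√q, -√q, q, -q)` the weight is `(1 - z²)(1 - z⁻²)`. -/
lemma AWI_special {s : ℝ} (hs0 : 0 < s) (hs1 : s < 1) :
    AWI ((s : ℂ) ^ 2) s (-s) (s ^ 2) (-s ^ 2) = 4 * Real.pi := by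
  have hq : ‖(s : ℂ) ^ 2‖ < 1 := by
    rw [norm_pow, Complex.norm_real, Real.norm_of_nonneg hs0.le]
    exact pow_lt_one₀ hs0.le hs1 two_ne_zero
  have hw : ∀ θ : ℝ, AWw ((s : ℂ) ^ 2) s (-s) (s ^ 2) (-s ^ 2)
      (Complex.exp ((θ : ℂ) * Complex.I)) = ((2 - 2 * Real.cos (2 * θ) : ℝ) : ℂ) := by
    intro θ
    have hcos : ((2 - 2 * Real.cos (2 * θ) : ℝ) : ℂ) =
        (1 - Complex.exp ((θ : ℂ) * Complex.I) ^ 2) *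
          (1 - (Complex.exp ((θ : ℂ) * Complex.I))⁻¹ ^ 2) := by
      have e1 : Complex.exp ((θ : ℂ) * Complex.I) ^ 2 = Complex.exp ((2 * θ : ℂ) * Complex.I) := by
        rw [← Complex.exp_nat_mul]; push_cast; ring_nf
      have e2 : (Complex.exp ((θ : ℂ) * Complex.I))⁻¹ ^ 2 =
          Complex.exp (-(2 * θ : ℂ) * Complex.I) := by
        rw [inv_pow, e1, ← Complex.exp_neg]; ring_nf
      have e3 : Complex.exp ((2 * θ : ℂ) * Complex.I) * Complex.exp (-(2 * θ : ℂ) * Complex.I) = 1 := by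
        rw [← Complex.exp_add]; simp
      rw [e1, e2]
      push_cast
      rw [Complex.cos]
      linear_combination -e3
    rw [hcos]
    have hz : ‖Complex.exp ((θ : ℂ) * Complex.I)‖ = 1 := Complex.norm_exp_ofReal_mul_I θ
    generalize Complex.exp ((θ : ℂ) * Complex.I) = z at *
    have f1 := qpi_four hq z
    have f2 := qpi_four hq z⁻¹
    have n1 : qpi ((s : ℂ) ^ 2) ((s : ℂ) ^ 2 * z ^ 2) ≠ 0 := qpi_ne_zero hq (by
      rw [norm_mul, norm_pow z, hz]; simpa using hq)
    have n2 : qpi ((s : ℂ) ^ 2) ((s : ℂ) ^ 2 * z⁻¹ ^ 2) ≠ 0 := qpi_ne_zero hq (by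
      rw [norm_mul, norm_pow z⁻¹, norm_inv, hz]; simpa using hq)
    unfold AWw
    rw [qpi_step hq (z ^ 2), qpi_step hq (z⁻¹ ^ 2), mul_comm (z ^ 2) ((s : ℂ) ^ 2),
      mul_comm (z⁻¹ ^ 2) ((s : ℂ) ^ 2), div_eq_iff]
    · linear_combination (-(1 - z ^ 2) * (1 - z⁻¹ ^ 2)) *
        (f1 * qpi ((s : ℂ) ^ 2) ((s : ℂ) ^ 2 * z⁻¹ ^ 2) + qpi ((s : ℂ) ^ 2) (s * z) *
          qpi ((s : ℂ) ^ 2) (-s * z) * qpi ((s : ℂ) ^ 2) (s ^ 2 * z) *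
          qpi ((s : ℂ) ^ 2) (-s ^ 2 * z) * f2)
    · rw [← f1] at n1
      rw [← f2] at n2
      simp only [ne_eq, mul_eq_zero, not_or] at n1 n2 ⊢
      tauto
  unfold AWI
  simp only [hw]
  rw [intervalIntegral.integral_ofReal]
  have : ∫ θ in (0 : ℝ)..2 * Real.pi, (2 - 2 * Real.cos (2 * θ)) = 4 * Real.pi := by
    rw [intervalIntegral.integral_sub (by simp) (Continuous.intervalIntegrable (by fun_prop) _ _),
      intervalIntegral.integral_const_mul,
      intervalIntegral.integral_comp_mul_left (fun x => Real.cos x) two_ne_zero, integral_cos]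
    have : Real.sin (2 * (2 * Real.pi)) = 0 := by
      have := Real.sin_nat_mul_pi 4
      rw [← this]; push_cast; ring_nf
    simp [this]
    ring
  rw [this]; push_cast; ring

lemma AWJ_special {s : ℝ} (hs0 : 0 < s) (hs1 : s < 1) :
    AWJ ((s : ℂ) ^ 2) s (-s) (s ^ 2) (-s ^ 2) * qpi ((s : ℂ) ^ 2) (s ^ 2) = 4 * Real.pi := by
  have hq : ‖(s : ℂ) ^ 2‖ < 1 := by
    rw [norm_pow, Complex.norm_real, Real.norm_of_nonneg hs0.le]
    exact pow_lt_one₀ hs0.le hs1 two_ne_zero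
  have hq2 : ‖(s : ℂ) ^ 2 * s ^ 2‖ < 1 := norm_mul_lt_one hq hq
  have hq3 : ‖(s : ℂ) ^ 2 * s ^ 2 * s ^ 2‖ < 1 := norm_mul_lt_one hq2 hq
  have n2 := qpi_ne_zero hq hq2
  have n3 := qpi_ne_zero hq hq3
  have s1 := qpi_step hq ((s : ℂ) ^ 2)
  have s2 := qpi_step hq ((s : ℂ) ^ 2 * s ^ 2)
  have s3 := qpi_step hq (-(s : ℂ) ^ 2)
  have f := qpi_four hq (s : ℂ)
  unfold AWJ
  rw [AWI_special hs0 hs1]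
  rw [show (s : ℂ) * -s * s ^ 2 * -s ^ 2 = s ^ 2 * s ^ 2 * s ^ 2 by ring,
    show (s : ℂ) * -s = -s ^ 2 by ring, show (-s : ℂ) * s ^ 2 = -(s ^ 2 * s) by ring,
    show (s : ℂ) * s ^ 2 = s ^ 2 * s by ring, show (s : ℂ) * -s ^ 2 = -(s ^ 2 * s) by ring,
    show (-s : ℂ) * -s ^ 2 = s ^ 2 * s by ring, show (s : ℂ) ^ 2 * -s ^ 2 = -s ^ 2 * s ^ 2 by ring]
  rw [show (s : ℂ) * s = s ^ 2 by ring, show (-s : ℂ) * s = -s ^ 2 by ring,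
    show (-(s : ℂ) ^ 2) * s = -(s ^ 2 * s) by ring, s1] at f
  rw [s1, div_mul_eq_mul_div, div_eq_iff n3]
  generalize qpi ((s : ℂ) ^ 2) (s ^ 2 * s) = X at *
  generalize qpi ((s : ℂ) ^ 2) (-(s ^ 2 * s)) = Y at *
  -- the specialised `qpi_four`, with `(q²;q)_∞` cancelled
  have f' : (1 - (s : ℂ) ^ 2) * qpi ((s : ℂ) ^ 2) (-s ^ 2) * X * Y = 1 := by
    apply mul_right_cancel₀ n2
    linear_combination f
  rw [s3] at f' ⊢
  rw [s2]
  generalize qpi ((s : ℂ) ^ 2) (-s ^ 2 * s ^ 2) = Z at *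
  generalize qpi ((s : ℂ) ^ 2) (s ^ 2 * s ^ 2 * s ^ 2) = T at *
  linear_combination (4 * Real.pi * T) * ((1 - (s : ℂ) ^ 2) * (1 - -(s : ℂ) ^ 2) * Z * X * Y + 1) * f'

/-! ### Passage to the half circle -/

lemma AWI_eq_half {q a b c d : ℂ} (hq : ‖q‖ < 1)
    (ha : ‖a‖ < 1) (hb : ‖b‖ < 1) (hc : ‖c‖ < 1) (hd : ‖d‖ < 1) :
    AWI q a b c d =
      2 * ∫ θ in (0 : ℝ)..Real.pi, AWw q a b c d (Complex.exp ((θ : ℂ) * Complex.I)) := by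
  have hw := AWw_continuous hq ha hb hc hd
  have hsymm : ∀ z : ℂ, AWw q a b c d z⁻¹ = AWw q a b c d z := fun z => by
    unfold AWw
    rw [inv_inv]
    congr 1 <;> ring
  have h := intervalIntegral.integral_comp_sub_left (a := 0) (b := Real.pi)
    (fun θ : ℝ => AWw q a b c d (Complex.exp ((θ : ℂ) * Complex.I))) (2 * Real.pi)
  have hrefl : ∀ θ : ℝ, AWw q a b c d (Complex.exp (((2 * Real.pi - θ : ℝ) : ℂ) * Complex.I)) =
      AWw q a b c d (Complex.exp ((θ : ℂ) * Complex.I)) := fun θ => by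
    rw [← hsymm, ← Complex.exp_neg]
    congr 1
    rw [← Complex.exp_periodic]
    congr 1; push_cast; ring
  simp only [hrefl] at h
  rw [show 2 * Real.pi - Real.pi = Real.pi by ring, sub_zero] at h
  unfold AWI
  rw [← intervalIntegral.integral_add_adjacent_intervals (hw.intervalIntegrable 0 Real.pi)
    (hw.intervalIntegrable Real.pi (2 * Real.pi)), ← h]
  ring

/-- Evaluation of the Askey-Wilson integral: for `0<q<1` and `|a|,|b|,|c|,|d|<1`,
`(2π)⁻¹ ∫_0^π w_{a,b,c,d}(e^{iθ}) dθ = (abcd;q)_∞ / (ab,ac,ad,bc,bd,cd,q;q)_∞`. -/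
theorem stmt18 (q : ℝ) (hq0 : 0 < q) (hq1 : q < 1) (a b c d : ℂ)
    (hA : ‖a‖ < 1) (hB : ‖b‖ < 1) (hC : ‖c‖ < 1) (hD : ‖d‖ < 1) :
    (2 * (Real.pi : ℂ))⁻¹ *
        ∫ θ in (0 : ℝ)..Real.pi, AWw (q : ℂ) a b c d (Complex.exp ((θ : ℂ) * Complex.I)) =
      qpi (q : ℂ) (a * b * c * d) /
        (qpi (q : ℂ) (a * b) * qpi (q : ℂ) (a * c) * qpi (q : ℂ) (a * d) *
          qpi (q : ℂ) (b * c) * qpi (q : ℂ) (b * d) * qpi (q : ℂ) (c * d) *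
          qpi (q : ℂ) (q : ℂ)) := by
  obtain ⟨s, hs0, hs1, rfl⟩ : ∃ s : ℝ, 0 < s ∧ s < 1 ∧ q = s ^ 2 :=
    ⟨√q, Real.sqrt_pos.mpr hq0, (Real.sqrt_lt' one_pos).mpr (by simpa using hq1),
      (Real.sq_sqrt hq0.le).symm⟩
  have hq : ‖(s : ℂ) ^ 2‖ < 1 := by
    rw [norm_pow, Complex.norm_real, Real.norm_of_nonneg hs0.le]
    exact pow_lt_one₀ hs0.le hs1 two_ne_zero
  have hs : ‖(s : ℂ)‖ < 1 := by rwa [Complex.norm_real, Real.norm_of_nonneg hs0.le]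
  have hJ : AWJ ((s : ℂ) ^ 2) a b c d * qpi ((s : ℂ) ^ 2) (s ^ 2) = 4 * Real.pi := by
    rw [← AWJ_special hs0 hs1, AWJ_const hs0 hs1 hA hB hC hD,
      AWJ_const hs0 hs1 hs (by rwa [norm_neg]) hq (by rwa [norm_neg])]
  have hI := AWI_eq_half hq hA hB hC hD
  push_cast
  unfold AWJ at hJ
  rw [hI] at hJ
  have hpi : (Real.pi : ℂ) ≠ 0 := by exact_mod_cast Real.pi_ne_zero
  have n0 := qpi_ne_zero hq (norm_mul_lt_one (norm_mul_lt_one (norm_mul_lt_one hA hB) hC) hD)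
  have n1 := qpi_ne_zero hq (norm_mul_lt_one hA hB)
  have n2 := qpi_ne_zero hq (norm_mul_lt_one hA hC)
  have n3 := qpi_ne_zero hq (norm_mul_lt_one hA hD)
  have n4 := qpi_ne_zero hq (norm_mul_lt_one hB hC)
  have n5 := qpi_ne_zero hq (norm_mul_lt_one hB hD)
  have n6 := qpi_ne_zero hq (norm_mul_lt_one hC hD)
  have n7 := qpi_ne_zero hq hq
  rw [div_mul_eq_mul_div, div_eq_iff n0] at hJ
  rw [inv_mul_eq_div, div_eq_div_iff (by simp [hpi]) (by simp [*])]
  linear_combination hJ / 2
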